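/- Let k be a commutative ring, A an associative unital k-algebra, λ ∈ k, and a, b ∈ A with b·a = λ•(a·b) + b. Define, in the tensor product algebra A ⊗ₖ A, Δa := a ⊗ 1 + 1 ⊗ a + (λ − 1)•(a ⊗ a) and Δb := b ⊗ 1 + 1 ⊗ b + (λ − 1)•(b ⊗ a). Then Δb·Δa = λ•(Δa·Δb) + Δb. -/

import Mathlib

open TensorProduct

theorem coproduct_preserves_vector_field_relation {k : Type*} [CommRing k]
    {A : Type*} [Ring A] [Algebra k A] (l : k) (a b : A)
    (hrel : b * a = l • (a * b) + b) :
    let Δa : A ⊗[k] A := a ⊗ₜ[k] (1 : A) + (1 : A) ⊗ₜ[k] a + (l - 1) • (a ⊗ₜ[k] a)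
    let Δb : A ⊗[k] A := b ⊗ₜ[k] (1 : A) + (1 : A) ⊗ₜ[k] b + (l - 1) • (b ⊗ₜ[k] a)
    Δb * Δa = l • (Δa * Δb) + Δb := by
  intro Δa Δb
  simp only [Δa, Δb, mul_add, add_mul, smul_mul_assoc, mul_smul_comm,
    Algebra.TensorProduct.tmul_mul_tmul, one_mul, mul_one, hrel,
    TensorProduct.add_tmul, TensorProduct.tmul_add, ← TensorProduct.smul_tmul',
    TensorProduct.tmul_smul, smul_add]
  module
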